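/- Soundness of rule L3: Let K be a statistical ALC knowledge base and A, B ALC concepts such that every model I of K satisfies B^I ⊆ A^I. If K ⊨_l (B|⊤)[m,1] for a rational m with 0 ≤ m ≤ 1, then K ⊨_l (A|⊤)[m,1]. -/

import Mathlib

open scoped Classical

/-- ALC concepts over concept names and role names (both drawn from ℕ,
regarded as disjoint name spaces). -/
inductive Cpt : Type where
  | top : Cpt
  | atom : ℕ → Cpt
  | neg : Cpt → Cpt
  | inter : Cpt → Cpt → Cpt
  | ex : ℕ → Cpt → Cpt
deriving DecidableEq

/-- A finite interpretation with domain drawn from the type `α`. -/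
structure Interp (α : Type) where
  dom : Finset α
  dom_nonempty : dom.Nonempty
  conc : ℕ → Finset α
  conc_sub : ∀ a, conc a ⊆ dom
  role : ℕ → Finset (α × α)
  role_sub : ∀ r, role r ⊆ dom ×ˢ dom

/-- The extension `C^I` of a concept. -/
noncomputable def Interp.ext {α : Type} (I : Interp α) : Cpt → Finset α
  | .top => I.dom
  | .atom a => I.conc a
  | .neg c => I.dom \ I.ext c
  | .inter c d => I.ext c ∩ I.ext d
  | .ex r c => I.dom.filter (fun d => ∃ e ∈ I.ext c, (d, e) ∈ I.role r)

/-- `[C]^I`, the cardinality of the extension of `C`. -/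
noncomputable def cardC {α : Type} (I : Interp α) (c : Cpt) : ℕ := (I.ext c).card

/-- A probabilistic conditional `(C|D)[l,u]`. -/
structure Cond : Type where
  C : Cpt
  D : Cpt
  l : ℚ
  u : ℚ
deriving DecidableEq

/-- `I ⊨ (C|D)[l,u]` iff `[D]^I = 0` or `l ≤ [C ⊓ D]^I/[D]^I ≤ u`. -/
def satCond {α : Type} (I : Interp α) (κ : Cond) : Prop :=
  cardC I κ.D = 0 ∨
    (κ.l ≤ (cardC I (.inter κ.C κ.D) : ℚ) / (cardC I κ.D : ℚ) ∧
     (cardC I (.inter κ.C κ.D) : ℚ) / (cardC I κ.D : ℚ) ≤ κ.u)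

/-- Finite interpretations (with domain drawn from the countable set ℕ). -/
abbrev FInterp := Interp ℕ

/-- The models of a knowledge base (finite set of conditionals). -/
def Models (K : Finset Cond) : Set FInterp := {I | ∀ κ ∈ K, satCond I κ}

/-- l-entailment: every model of `K` satisfies the conditional. -/
def entailsL (K : Finset Cond) (κ : Cond) : Prop := ∀ I ∈ Models K, satCond I κ

theorem mem_ext_inter {α : Type} (I : Interp α) (c d : Cpt) (x : α) :
    x ∈ I.ext (.inter c d) ↔ x ∈ I.ext c ∧ x ∈ I.ext d := by
  simp only [Interp.ext, Finset.mem_inter]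

/-- Soundness of rule L3. -/
theorem rule_L3_sound (K : Finset Cond) (A B : Cpt)
    (hsub : ∀ I ∈ Models K, I.ext B ⊆ I.ext A)
    (m : ℚ) (hm0 : 0 ≤ m) (hm1 : m ≤ 1)
    (hent : entailsL K ⟨B, .top, m, 1⟩) :
    entailsL K ⟨A, .top, m, 1⟩ := by
  intro I hI
  rcases hent I hI with h | ⟨h1, _⟩
  · exact Or.inl h
  · refine Or.inr ⟨h1.trans ?_, ?_⟩
    · have hc : cardC I (.inter B .top) ≤ cardC I (.inter A .top) := by
        unfold cardC
        refine Finset.card_le_card (fun x hx => ?_)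
        rw [mem_ext_inter] at hx ⊢
        exact ⟨hsub I hI hx.1, hx.2⟩
      have hq : (cardC I (.inter B .top) : ℚ) ≤ (cardC I (.inter A .top) : ℚ) := by
        exact_mod_cast hc
      exact div_le_div_of_nonneg_right hq (Nat.cast_nonneg _)
    · have hc : cardC I (.inter A .top) ≤ cardC I .top := by
        unfold cardC
        refine Finset.card_le_card (fun x hx => ?_)
        rw [mem_ext_inter] at hx
        exact hx.2
      have hq : (cardC I (.inter A .top) : ℚ) ≤ (cardC I .top : ℚ) := by
        exact_mod_cast hc
      exact div_le_one_of_le₀ hq (Nat.cast_nonneg _)
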